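/- Let B ⊆ {2,…,K} be nonempty, J ⊆ (0,∞) an open interval, and N_a : J → (0,∞) for a ∈ [K] differentiable functions such that for all N ∈ J: Σ_{a∈[K]} N_a(N) = N; N_a is constant on J for every a ∈ B̄^c; g(μ, N(N)) = 0; and W_a(N_1(N), N_a(N)) takes a common value I_B(N) for all a ∈ B. Then for all N ∈ J, writing D = (N_1 + Σ_{a∈B} N_a)·h(B) + d_B^{-1}·h(N): N_1'(N) = N_1·h(B)/D; for every b ∈ B, N_b'(N) = (N_b·h(B) + d_{b,b}^{-1}·h(N))/D; the common index satisfies I_B'(N) = (I_B(N)·h(B) + h(N))/D; and for every a ∈ B̄^c the index I_a(N) = W_a(N_1(N), N_a) satisfies I_a'(N) = N_1'(N)·d(μ_1, x_{1,a}) = N_1·h(B)·d_{1,a}/D. -/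

import Mathlib

open scoped BigOperators

/-- A single-parameter exponential family, given by the log-partition function `b`,
smooth with positive second derivative on an open interval `Θ`, together with the
inverse `θof` of `b'` on the set of means `S = b'(Θ)`. -/
structure SPEF where
  Θ : Set ℝ
  Θ_isOpen : IsOpen Θ
  Θ_ordConnected : Set.OrdConnected Θ
  Θ_nonempty : Θ.Nonempty
  b : ℝ → ℝ
  b_smooth : ContDiffOn ℝ (⊤ : ℕ∞) b Θ
  b_conv : ∀ t ∈ Θ, 0 < iteratedDeriv 2 b t
  θof : ℝ → ℝ
  θof_mem : ∀ μ ∈ deriv b '' Θ, θof μ ∈ Θ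
  θof_spec : ∀ μ ∈ deriv b '' Θ, deriv b (θof μ) = μ

namespace SPEF

/-- The set of means of the family. -/
def S (F : SPEF) : Set ℝ := deriv F.b '' F.Θ

/-- KL divergence `d(μ, x)` between the members of the family with means `μ` and `x`. -/
noncomputable def d (F : SPEF) (μ x : ℝ) : ℝ :=
  (F.θof μ - F.θof x) * μ - F.b (F.θof μ) + F.b (F.θof x)

end SPEF

/-- A `K`-armed bandit instance with arm distributions in a fixed SPEF; arm `0`
(the paper's arm `1`) is the unique best arm. -/
structure Bandit (K : ℕ) [NeZero K] extends SPEF where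
  two_le : 2 ≤ K
  μ : Fin K → ℝ
  μ_mem : ∀ a, μ a ∈ SPEF.S toSPEF
  μ_best : ∀ a : Fin K, a ≠ 0 → μ a < μ 0

namespace Bandit

variable {K : ℕ} [NeZero K]

/-- KL divergence of the underlying family. -/
noncomputable def d (M : Bandit K) : ℝ → ℝ → ℝ := M.toSPEF.d

/-- The weighted mean `x_{1,a}(N₁, N_a)`. -/
noncomputable def x1 (M : Bandit K) (a : Fin K) (N1 Na : ℝ) : ℝ :=
  (N1 * M.μ 0 + Na * M.μ a) / (N1 + Na)

/-- The index `W_a(N₁, N_a)` of an arm `a ≠ 1`. -/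
noncomputable def W (M : Bandit K) (a : Fin K) (N1 Na : ℝ) : ℝ :=
  N1 * M.d (M.μ 0) (M.x1 a N1 Na) + Na * M.d (M.μ a) (M.x1 a N1 Na)

/-- The set `{2, …, K}` of suboptimal arms. -/
def alt (K : ℕ) [NeZero K] : Finset (Fin K) := Finset.univ.filter (fun a => a ≠ 0)

/-- The anchor function `g(μ, N)`. -/
noncomputable def g (M : Bandit K) (Nv : Fin K → ℝ) : ℝ :=
  (∑ a ∈ alt K, M.d (M.μ 0) (M.x1 a (Nv 0) (Nv a)) / M.d (M.μ a) (M.x1 a (Nv 0) (Nv a))) - 1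

end Bandit

open Bandit

namespace Bandit

variable {K : ℕ} [NeZero K]

/-- Partial derivative of the KL divergence `d` in its second argument. -/
noncomputable def d2 (M : Bandit K) (μv x : ℝ) : ℝ := deriv (fun y => M.d μv y) x

/-- The quantity `f(μ, a, N)`, the negative of the derivative of `g` w.r.t. `x_{1,a}`. -/
noncomputable def fq (M : Bandit K) (a : Fin K) (Nv : Fin K → ℝ) : ℝ :=
  (M.d (M.μ 0) (M.x1 a (Nv 0) (Nv a)) / M.d (M.μ a) (M.x1 a (Nv 0) (Nv a))) *
    (M.d2 (M.μ a) (M.x1 a (Nv 0) (Nv a)) / M.d (M.μ a) (M.x1 a (Nv 0) (Nv a)) -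
      M.d2 (M.μ 0) (M.x1 a (Nv 0) (Nv a)) / M.d (M.μ 0) (M.x1 a (Nv 0) (Nv a)))

/-- The quantity `h_a(μ, N₁, N_a) = f(μ, a, N)·N₁²·Δ_a/(N₁+N_a)²`. -/
noncomputable def hq (M : Bandit K) (a : Fin K) (Nv : Fin K → ℝ) : ℝ :=
  M.fq a Nv * ((Nv 0) ^ 2 * (M.μ 0 - M.μ a) / (Nv 0 + Nv a) ^ 2)

/-- The quantity `h(B) = Σ_{a∈B} h_a·d_{a,a}⁻¹`. -/
noncomputable def hB (M : Bandit K) (B : Finset (Fin K)) (Nv : Fin K → ℝ) : ℝ :=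
  ∑ a ∈ B, M.hq a Nv / M.d (M.μ a) (M.x1 a (Nv 0) (Nv a))

/-- The quantity `h(N) = Σ_{a∈B̄ᶜ} h_a·N_a`. -/
noncomputable def hN (M : Bandit K) (B : Finset (Fin K)) (Nv : Fin K → ℝ) : ℝ :=
  ∑ a ∈ alt K \ B, M.hq a Nv * Nv a

/-- The quantity `d_B = (Σ_{a∈B} d_{a,a}⁻¹)⁻¹`. -/
noncomputable def dB (M : Bandit K) (B : Finset (Fin K)) (Nv : Fin K → ℝ) : ℝ :=
  (∑ a ∈ B, (M.d (M.μ a) (M.x1 a (Nv 0) (Nv a)))⁻¹)⁻¹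

end Bandit

/-
The relations holding along a fluid trajectory are differentiated at one point. Since `x_{1,a}`
minimizes `x ↦ N₁ d(μ₁, x) + N_a d(μ_a, x)`, its motion does not contribute to the derivative of
the index, so `W_a' = N₁' d_{1,a} + N_a' d_{a,a}`. The means `x_{1,a}`, and hence `g`, depend
only on the ratios `N_a / N₁`, so `g'` is a combination of the cross rates `N₁ N_a' - N₁' N_a`.
For `a ∈ B` these are `c / d_{a,a}`, where `c = N₁ I_B' - N₁' I_B` is the same number for all of
`B`, and for `a ∉ B` they are `-N₁' N_a`. The constraints `g = 0` and `∑ N_a = N` therefore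
become the linear system `c h(B) = N₁' h(N)`, `N₁ = N₁' (N₁ + ∑_B N_b) + c d_B⁻¹` for the pair
`(N₁', c)`; up to sign its determinant is `D > 0`.
-/

lemma add_mul_sub_lt_of_strictConvexOn {s : Set ℝ} {f : ℝ → ℝ} {f' x y : ℝ}
    (hf : StrictConvexOn ℝ s f) (hx : x ∈ s) (hy : y ∈ s) (hxy : x ≠ y)
    (hf' : HasDerivAt f f' x) : f x + f' * (y - x) < f y := by
  rcases hxy.lt_or_gt with h | h
  · have hslope := hf.lt_slope_of_hasDerivAt hx hy h hf'
    rw [slope_def_field, lt_div_iff₀ (sub_pos.2 h)] at hslope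
    linarith
  · have hslope := hf.slope_lt_of_hasDerivAt hy hx h hf'
    rw [slope_def_field, div_lt_iff₀ (sub_pos.2 h)] at hslope
    linarith

lemma eq_div_and_eq_div_of_linear_system {𝕜 : Type*} [Field 𝕜] {p q r a b c d : 𝕜}
    (hD : a * c + b * d ≠ 0) (h₁ : q * c = p * d) (h₂ : r = p * a + q * b) :
    p = r * c / (a * c + b * d) ∧ q = r * d / (a * c + b * d) := by
  rw [eq_div_iff hD, eq_div_iff hD, h₂]
  exact ⟨by linear_combination -b * h₁, by linear_combination a * h₁⟩

namespace SPEF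

variable (F : SPEF)

lemma hasDerivAt_b {t : ℝ} (ht : t ∈ F.Θ) : HasDerivAt F.b (deriv F.b t) t :=
  ((F.b_smooth.contDiffAt (F.Θ_isOpen.mem_nhds ht)).differentiableAt (by simp)).hasDerivAt

lemma hasStrictDerivAt_deriv_b {t : ℝ} (ht : t ∈ F.Θ) :
    HasStrictDerivAt (deriv F.b) (iteratedDeriv 2 F.b t) t := by
  have hb : ContDiffOn ℝ 1 (deriv F.b) F.Θ := F.b_smooth.deriv_of_isOpen F.Θ_isOpen
    (WithTop.coe_le_coe.2 (le_top : (1 : ℕ∞) + 1 ≤ ⊤))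
  rw [iteratedDeriv_succ, iteratedDeriv_one]
  exact (hb.contDiffAt (F.Θ_isOpen.mem_nhds ht)).hasStrictDerivAt (by simp)

lemma strictConvexOn_b : StrictConvexOn ℝ F.Θ F.b :=
  strictConvexOn_of_deriv2_pos' F.Θ_ordConnected.convex F.b_smooth.continuousOn fun t ht => by
    rw [← iteratedDeriv_eq_iterate]
    exact F.b_conv t ht

lemma θof_deriv_b {t : ℝ} (ht : t ∈ F.Θ) : F.θof (deriv F.b t) = t :=
  (F.strictConvexOn_b.strictMonoOn_deriv fun _ hs => (F.hasDerivAt_b hs).differentiableAt).injOn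
    (F.θof_mem _ ⟨t, ht, rfl⟩) ht (F.θof_spec _ ⟨t, ht, rfl⟩)

lemma ordConnected_S : F.S.OrdConnected :=
  (F.Θ_ordConnected.isPreconnected.image _ fun _ ht =>
    (F.hasStrictDerivAt_deriv_b ht).hasDerivAt.continuousAt.continuousWithinAt).ordConnected

lemma hasDerivAt_θof {x : ℝ} (hx : x ∈ F.S) :
    HasDerivAt F.θof (iteratedDeriv 2 F.b (F.θof x))⁻¹ x := by
  obtain ⟨t, ht, rfl⟩ := hx
  rw [F.θof_deriv_b ht]
  exact ((F.hasStrictDerivAt_deriv_b ht).to_local_left_inverse (F.b_conv t ht).ne'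
    (Filter.eventually_of_mem (F.Θ_isOpen.mem_nhds ht) fun _ => F.θof_deriv_b)).hasDerivAt

lemma hasDerivAt_d (μ : ℝ) {x : ℝ} (hx : x ∈ F.S) :
    HasDerivAt (F.d μ) ((iteratedDeriv 2 F.b (F.θof x))⁻¹ * (x - μ)) x := by
  have hθ := F.hasDerivAt_θof hx
  have hb := (F.hasDerivAt_b (F.θof_mem x hx)).comp x hθ
  rw [F.θof_spec x hx] at hb
  refine ((((hθ.const_sub (F.θof μ)).mul_const μ).sub_const (F.b (F.θof μ))).add hb).congr_deriv ?_
  ring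

lemma d_pos {μ x : ℝ} (hμ : μ ∈ F.S) (hx : x ∈ F.S) (hne : μ ≠ x) : 0 < F.d μ x := by
  have hθne : F.θof μ ≠ F.θof x := fun h => hne <| by
    rw [← F.θof_spec μ hμ, h, F.θof_spec x hx]
  have htangent := add_mul_sub_lt_of_strictConvexOn F.strictConvexOn_b (F.θof_mem μ hμ)
    (F.θof_mem x hx) hθne (F.hasDerivAt_b (F.θof_mem μ hμ))
  rw [F.θof_spec μ hμ] at htangent
  unfold d
  linarith

end SPEF

namespace Bandit

variable {K : ℕ} [NeZero K] (M : Bandit K)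

lemma mem_alt {a : Fin K} : a ∈ alt K ↔ a ≠ 0 := by simp [alt]

lemma sum_eq_add_sum_alt (u : Fin K → ℝ) : ∑ a, u a = u 0 + ∑ a ∈ alt K, u a := by
  rw [alt, Finset.filter_ne', Finset.add_sum_erase _ _ (Finset.mem_univ 0)]

section SecondArgument

variable {x : ℝ}

lemma d2_eq (ν : ℝ) (hx : x ∈ M.toSPEF.S) :
    M.d2 ν x = (iteratedDeriv 2 M.b (M.θof x))⁻¹ * (x - ν) :=
  (M.toSPEF.hasDerivAt_d ν hx).deriv

lemma hasDerivAt_d (ν : ℝ) (hx : x ∈ M.toSPEF.S) : HasDerivAt (M.d ν) (M.d2 ν x) x :=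
  (M.toSPEF.hasDerivAt_d ν hx).differentiableAt.hasDerivAt

lemma d2_pos {ν : ℝ} (hx : x ∈ M.toSPEF.S) (h : ν < x) : 0 < M.d2 ν x := by
  rw [M.d2_eq ν hx]
  exact mul_pos (inv_pos.2 (M.b_conv _ (M.θof_mem x hx))) (sub_pos.2 h)

lemma d2_neg {ν : ℝ} (hx : x ∈ M.toSPEF.S) (h : x < ν) : M.d2 ν x < 0 := by
  rw [M.d2_eq ν hx]
  exact mul_neg_of_pos_of_neg (inv_pos.2 (M.b_conv _ (M.θof_mem x hx))) (sub_neg.2 h)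

end SecondArgument

section Arm

variable {a : Fin K} {N₁ Nₐ : ℝ}

lemma x1_mem_Ioo (ha : a ≠ 0) (h₁ : 0 < N₁) (hₐ : 0 < Nₐ) :
    M.x1 a N₁ Nₐ ∈ Set.Ioo (M.μ a) (M.μ 0) := by
  have hsum : 0 < N₁ + Nₐ := add_pos h₁ hₐ
  rw [Set.mem_Ioo, x1, lt_div_iff₀ hsum, div_lt_iff₀ hsum]
  constructor
  · linarith [mul_lt_mul_of_pos_left (M.μ_best a ha) h₁]
  · linarith [mul_lt_mul_of_pos_left (M.μ_best a ha) hₐ]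

lemma x1_mem_S (ha : a ≠ 0) (h₁ : 0 < N₁) (hₐ : 0 < Nₐ) : M.x1 a N₁ Nₐ ∈ M.toSPEF.S :=
  M.toSPEF.ordConnected_S.out (M.μ_mem a) (M.μ_mem 0)
    (Set.Ioo_subset_Icc_self (M.x1_mem_Ioo ha h₁ hₐ))

lemma d_best_x1_pos (ha : a ≠ 0) (h₁ : 0 < N₁) (hₐ : 0 < Nₐ) :
    0 < M.d (M.μ 0) (M.x1 a N₁ Nₐ) :=
  M.toSPEF.d_pos (M.μ_mem 0) (M.x1_mem_S ha h₁ hₐ) (M.x1_mem_Ioo ha h₁ hₐ).2.ne'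

lemma d_self_x1_pos (ha : a ≠ 0) (h₁ : 0 < N₁) (hₐ : 0 < Nₐ) :
    0 < M.d (M.μ a) (M.x1 a N₁ Nₐ) :=
  M.toSPEF.d_pos (M.μ_mem a) (M.x1_mem_S ha h₁ hₐ) (M.x1_mem_Ioo ha h₁ hₐ).1.ne

-- First-order condition for `x_{1,a}` to minimize `x ↦ N₁ d(μ₁, x) + N_a d(μ_a, x)`.
lemma mul_d2_add_mul_d2_x1 (ha : a ≠ 0) (h₁ : 0 < N₁) (hₐ : 0 < Nₐ) :
    N₁ * M.d2 (M.μ 0) (M.x1 a N₁ Nₐ) + Nₐ * M.d2 (M.μ a) (M.x1 a N₁ Nₐ) = 0 := by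
  have hmean : M.x1 a N₁ Nₐ * (N₁ + Nₐ) = N₁ * M.μ 0 + Nₐ * M.μ a :=
    div_mul_cancel₀ _ (add_pos h₁ hₐ).ne'
  rw [M.d2_eq _ (M.x1_mem_S ha h₁ hₐ), M.d2_eq _ (M.x1_mem_S ha h₁ hₐ)]
  linear_combination (iteratedDeriv 2 M.b (M.θof (M.x1 a N₁ Nₐ)))⁻¹ * hmean

end Arm

section Positivity

variable {a : Fin K} {B : Finset (Fin K)} {n : Fin K → ℝ}

lemma fq_pos (ha : a ≠ 0) (h₁ : 0 < n 0) (hₐ : 0 < n a) : 0 < M.fq a n := by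
  have hx := M.x1_mem_S ha h₁ hₐ
  have hd₁ := M.d_best_x1_pos ha h₁ hₐ
  have hdₐ := M.d_self_x1_pos ha h₁ hₐ
  have hbest := div_neg_of_neg_of_pos (M.d2_neg hx (M.x1_mem_Ioo ha h₁ hₐ).2) hd₁
  have hself := div_pos (M.d2_pos hx (M.x1_mem_Ioo ha h₁ hₐ).1) hdₐ
  exact mul_pos (div_pos hd₁ hdₐ) (sub_pos.2 (hbest.trans hself))

lemma hq_pos (ha : a ≠ 0) (h₁ : 0 < n 0) (hₐ : 0 < n a) : 0 < M.hq a n := by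
  have hf := M.fq_pos ha h₁ hₐ
  have hΔ := sub_pos.2 (M.μ_best a ha)
  unfold hq
  positivity

lemma hB_pos (hB : B.Nonempty) (hBsub : B ⊆ alt K) (hn : ∀ a, 0 < n a) : 0 < M.hB B n :=
  Finset.sum_pos (fun b hb => div_pos (M.hq_pos (mem_alt.1 (hBsub hb)) (hn 0) (hn b))
    (M.d_self_x1_pos (mem_alt.1 (hBsub hb)) (hn 0) (hn b))) hB

lemma hN_nonneg (B : Finset (Fin K)) (hn : ∀ a, 0 < n a) : 0 ≤ M.hN B n :=
  Finset.sum_nonneg fun a ha =>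
    (mul_pos (M.hq_pos (mem_alt.1 (Finset.mem_sdiff.1 ha).1) (hn 0) (hn a)) (hn a)).le

lemma dB_nonneg (hBsub : B ⊆ alt K) (hn : ∀ a, 0 < n a) : 0 ≤ M.dB B n :=
  inv_nonneg.2 <| Finset.sum_nonneg fun b hb =>
    (inv_pos.2 (M.d_self_x1_pos (mem_alt.1 (hBsub hb)) (hn 0) (hn b))).le

/-- The common denominator `D = (N₁ + ∑_{a ∈ B} N_a) h(B) + d_B⁻¹ h(N)` of the fluid ODEs. -/
noncomputable def fluidDenom (M : Bandit K) (B : Finset (Fin K)) (n : Fin K → ℝ) : ℝ :=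
  (n 0 + ∑ a ∈ B, n a) * M.hB B n + (M.dB B n)⁻¹ * M.hN B n

lemma fluidDenom_pos (hB : B.Nonempty) (hBsub : B ⊆ alt K) (hn : ∀ a, 0 < n a) :
    0 < M.fluidDenom B n :=
  add_pos_of_pos_of_nonneg
    (mul_pos (add_pos_of_pos_of_nonneg (hn 0) (Finset.sum_nonneg fun a _ => (hn a).le))
      (M.hB_pos hB hBsub hn))
    (mul_nonneg (inv_nonneg.2 (M.dB_nonneg hBsub hn)) (M.hN_nonneg B hn))

end Positivity

section Derivatives

variable {s : Set ℝ} {t : ℝ}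

lemma hasDerivWithinAt_x1 (a : Fin K) {u v : ℝ → ℝ} {u' v' : ℝ} (hu : HasDerivWithinAt u u' s t)
    (hv : HasDerivWithinAt v v' s t) (hne : u t + v t ≠ 0) :
    HasDerivWithinAt (fun r => M.x1 a (u r) (v r))
      ((M.μ 0 - M.μ a) * (u' * v t - u t * v') / (u t + v t) ^ 2) s t := by
  refine (((hu.mul_const (M.μ 0)).fun_add (hv.mul_const (M.μ a))).fun_div
    (hu.fun_add hv) hne).congr_deriv ?_
  congr 1
  ring

lemma hasDerivWithinAt_W {a : Fin K} (ha : a ≠ 0) {u v : ℝ → ℝ} {u' v' : ℝ}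
    (hu : HasDerivWithinAt u u' s t) (hv : HasDerivWithinAt v v' s t) (hut : 0 < u t)
    (hvt : 0 < v t) :
    HasDerivWithinAt (fun r => M.W a (u r) (v r))
      (u' * M.d (M.μ 0) (M.x1 a (u t) (v t)) + v' * M.d (M.μ a) (M.x1 a (u t) (v t))) s t := by
  have hx := M.hasDerivWithinAt_x1 a hu hv (add_pos hut hvt).ne'
  have hd (ν : ℝ) := (M.hasDerivAt_d ν (M.x1_mem_S ha hut hvt)).comp_hasDerivWithinAt t hx
  refine ((hu.mul (hd (M.μ 0))).add (hv.mul (hd (M.μ a)))).congr_deriv ?_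
  simp only [Function.comp_apply]
  linear_combination ((M.μ 0 - M.μ a) * (u' * v t - u t * v') / (u t + v t) ^ 2) *
    M.mul_d2_add_mul_d2_x1 ha hut hvt

lemma hasDerivAt_d_best_div_d_self {a : Fin K} {n : Fin K → ℝ} (ha : a ≠ 0) (h₁ : 0 < n 0)
    (hₐ : 0 < n a) :
    HasDerivAt (fun x => M.d (M.μ 0) x / M.d (M.μ a) x) (-M.fq a n) (M.x1 a (n 0) (n a)) := by
  have hx := M.x1_mem_S ha h₁ hₐ
  have hd₁ := (M.d_best_x1_pos ha h₁ hₐ).ne'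
  have hdₐ := (M.d_self_x1_pos ha h₁ hₐ).ne'
  refine ((M.hasDerivAt_d _ hx).fun_div (M.hasDerivAt_d _ hx) hdₐ).congr_deriv ?_
  unfold fq
  field_simp
  ring

variable {Nf : ℝ → Fin K → ℝ} {n' : Fin K → ℝ}

lemma hasDerivWithinAt_d_best_div_d_self_x1 {a : Fin K} (ha : a ≠ 0) (h₁ : 0 < Nf t 0)
    (hₐ : 0 < Nf t a) (h₁' : HasDerivWithinAt (fun r => Nf r 0) (n' 0) s t)
    (hₐ' : HasDerivWithinAt (fun r => Nf r a) (n' a) s t) :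
    HasDerivWithinAt (fun r => M.d (M.μ 0) (M.x1 a (Nf r 0) (Nf r a)) /
        M.d (M.μ a) (M.x1 a (Nf r 0) (Nf r a)))
      (M.hq a (Nf t) * (Nf t 0 * n' a - n' 0 * Nf t a) / Nf t 0 ^ 2) s t := by
  have hne : Nf t 0 + Nf t a ≠ 0 := (add_pos h₁ hₐ).ne'
  refine ((M.hasDerivAt_d_best_div_d_self ha h₁ hₐ).comp_hasDerivWithinAt t
    (M.hasDerivWithinAt_x1 a h₁' hₐ' hne)).congr_deriv ?_
  unfold hq
  field_simp
  ring

lemma hasDerivWithinAt_g (hpos : ∀ a, 0 < Nf t a)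
    (hn' : ∀ a, HasDerivWithinAt (fun r => Nf r a) (n' a) s t) :
    HasDerivWithinAt (fun r => M.g (Nf r))
      (∑ a ∈ alt K, M.hq a (Nf t) * (Nf t 0 * n' a - n' 0 * Nf t a) / Nf t 0 ^ 2) s t :=
  (HasDerivWithinAt.fun_sum fun a ha => M.hasDerivWithinAt_d_best_div_d_self_x1 (mem_alt.1 ha)
    (hpos 0) (hpos a) (hn' 0) (hn' a)).sub_const 1

end Derivatives

/-- `Nf` is a fluid trajectory on `J`, parametrized by the total allocation: the anchor function
vanishes along it, the arms in `B` share the index `I`, and the suboptimal arms outside `B` are not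
sampled. No regularity of `Nf` or of the time set `J` is part of the notion. -/
structure IsFluidOn (M : Bandit K) (B : Finset (Fin K)) (J : Set ℝ) (Nf : ℝ → Fin K → ℝ)
    (I : ℝ → ℝ) : Prop where
  nonempty : B.Nonempty
  subset_alt : B ⊆ alt K
  pos : ∀ t ∈ J, ∀ a, 0 < Nf t a
  sum_eq : ∀ t ∈ J, ∑ a, Nf t a = t
  const : ∀ a ∈ alt K \ B, ∀ t ∈ J, ∀ r ∈ J, Nf t a = Nf r a
  g_eq_zero : ∀ t ∈ J, M.g (Nf t) = 0
  W_eq : ∀ t ∈ J, ∀ a ∈ B, M.W a (Nf t 0) (Nf t a) = I t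

namespace IsFluidOn

variable {M} {B : Finset (Fin K)} {J : Set ℝ} {Nf : ℝ → Fin K → ℝ} {I : ℝ → ℝ} {N : ℝ}
  {n' : Fin K → ℝ} {I' : ℝ} {a b : Fin K}

lemma ne_zero (h : M.IsFluidOn B J Nf I) (hb : b ∈ B) : b ≠ 0 :=
  mem_alt.1 (h.subset_alt hb)

lemma rate_eq_zero (h : M.IsFluidOn B J Nf I) (hN : N ∈ J) (hJ : UniqueDiffWithinAt ℝ J N)
    (ha : a ∈ alt K \ B) (hn' : HasDerivWithinAt (fun t => Nf t a) (n' a) J N) : n' a = 0 :=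
  hJ.eq_deriv _ hn' <|
    (hasDerivWithinAt_const N J (Nf N a)).congr_of_mem (fun t ht => h.const a ha t ht N hN) hN

lemma rate_add_sum_rate (h : M.IsFluidOn B J Nf I) (hN : N ∈ J) (hJ : UniqueDiffWithinAt ℝ J N)
    (hn' : ∀ a, HasDerivWithinAt (fun t => Nf t a) (n' a) J N) :
    n' 0 + ∑ b ∈ B, n' b = 1 := by
  have hoff : ∑ a ∈ alt K \ B, n' a = 0 :=
    Finset.sum_eq_zero fun a ha => h.rate_eq_zero hN hJ ha (hn' a)
  have htotal : ∑ a, n' a = 1 := hJ.eq_deriv _ (HasDerivWithinAt.fun_sum fun a _ => hn' a)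
    ((hasDerivWithinAt_id N J).congr_of_mem h.sum_eq hN)
  rwa [sum_eq_add_sum_alt, ← Finset.sum_sdiff h.subset_alt, hoff, zero_add] at htotal

lemma sum_hq_mul_cross_rate (h : M.IsFluidOn B J Nf I) (hN : N ∈ J)
    (hJ : UniqueDiffWithinAt ℝ J N) (hn' : ∀ a, HasDerivWithinAt (fun t => Nf t a) (n' a) J N) :
    ∑ b ∈ B, M.hq b (Nf N) * (Nf N 0 * n' b - n' 0 * Nf N b) = n' 0 * M.hN B (Nf N) := by
  have hg' := hJ.eq_deriv _ (M.hasDerivWithinAt_g (h.pos N hN) hn')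
    ((hasDerivWithinAt_const N J 0).congr_of_mem h.g_eq_zero hN)
  rw [← Finset.sum_div, div_eq_zero_iff, or_iff_left (pow_ne_zero 2 (h.pos N hN 0).ne'),
    ← Finset.sum_sdiff h.subset_alt] at hg'
  have hoff : ∑ a ∈ alt K \ B, M.hq a (Nf N) * (Nf N 0 * n' a - n' 0 * Nf N a) =
      -(n' 0 * M.hN B (Nf N)) := by
    rw [Bandit.hN, Finset.mul_sum, ← Finset.sum_neg_distrib]
    refine Finset.sum_congr rfl fun a ha => ?_
    rw [h.rate_eq_zero hN hJ ha (hn' a)]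
    ring
  linarith

lemma hasDerivWithinAt_index (h : M.IsFluidOn B J Nf I) (hN : N ∈ J)
    (hn' : ∀ a, HasDerivWithinAt (fun t => Nf t a) (n' a) J N) (hb : b ∈ B) :
    HasDerivWithinAt I (n' 0 * M.d (M.μ 0) (M.x1 b (Nf N 0) (Nf N b)) +
      n' b * M.d (M.μ b) (M.x1 b (Nf N 0) (Nf N b))) J N :=
  (M.hasDerivWithinAt_W (h.ne_zero hb) (hn' 0) (hn' b) (h.pos N hN 0) (h.pos N hN b)).congr_of_mem
    (fun t ht => (h.W_eq t ht b hb).symm) hN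

lemma cross_rate_eq (h : M.IsFluidOn B J Nf I) (hN : N ∈ J) (hJ : UniqueDiffWithinAt ℝ J N)
    (hn' : ∀ a, HasDerivWithinAt (fun t => Nf t a) (n' a) J N)
    (hI' : HasDerivWithinAt I I' J N) (hb : b ∈ B) :
    Nf N 0 * n' b - n' 0 * Nf N b =
      (Nf N 0 * I' - n' 0 * I N) * (M.d (M.μ b) (M.x1 b (Nf N 0) (Nf N b)))⁻¹ := by
  have hd := (M.d_self_x1_pos (h.ne_zero hb) (h.pos N hN 0) (h.pos N hN b)).ne'
  rw [← div_eq_mul_inv, eq_div_iff hd, hJ.eq_deriv _ hI' (h.hasDerivWithinAt_index hN hn' hb),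
    ← h.W_eq N hN b hb, W]
  ring

lemma rate_zero_and_index_cross_rate_eq (h : M.IsFluidOn B J Nf I) (hN : N ∈ J)
    (hJ : UniqueDiffWithinAt ℝ J N) (hn' : ∀ a, HasDerivWithinAt (fun t => Nf t a) (n' a) J N)
    (hI' : HasDerivWithinAt I I' J N) :
    n' 0 = Nf N 0 * M.hB B (Nf N) / M.fluidDenom B (Nf N) ∧
      Nf N 0 * I' - n' 0 * I N = Nf N 0 * M.hN B (Nf N) / M.fluidDenom B (Nf N) := by
  refine eq_div_and_eq_div_of_linear_system
    (M.fluidDenom_pos h.nonempty h.subset_alt (h.pos N hN)).ne' ?_ ?_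
  · rw [← h.sum_hq_mul_cross_rate hN hJ hn', hB, Finset.mul_sum]
    refine Finset.sum_congr rfl fun b hb => ?_
    rw [h.cross_rate_eq hN hJ hn' hI' hb]
    ring
  · have hcross : Nf N 0 * ∑ b ∈ B, n' b - n' 0 * ∑ b ∈ B, Nf N b =
        (Nf N 0 * I' - n' 0 * I N) * (M.dB B (Nf N))⁻¹ := by
      rw [dB, inv_inv]
      simp only [Finset.mul_sum, ← Finset.sum_sub_distrib]
      exact Finset.sum_congr rfl fun b hb => h.cross_rate_eq hN hJ hn' hI' hb
    linear_combination hcross - Nf N 0 * h.rate_add_sum_rate hN hJ hn'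

lemma rate_eq (h : M.IsFluidOn B J Nf I) (hN : N ∈ J) (hJ : UniqueDiffWithinAt ℝ J N)
    (hn' : ∀ a, HasDerivWithinAt (fun t => Nf t a) (n' a) J N)
    (hI' : HasDerivWithinAt I I' J N) (hb : b ∈ B) :
    n' b = (Nf N b * M.hB B (Nf N) + (M.d (M.μ b) (M.x1 b (Nf N 0) (Nf N b)))⁻¹ *
      M.hN B (Nf N)) / M.fluidDenom B (Nf N) := by
  obtain ⟨hrate, hcross⟩ := h.rate_zero_and_index_cross_rate_eq hN hJ hn' hI'
  have hb' := h.cross_rate_eq hN hJ hn' hI' hb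
  rw [hcross, hrate] at hb'
  apply mul_left_cancel₀ (h.pos N hN 0).ne'
  linear_combination hb'

lemma index_rate_eq (h : M.IsFluidOn B J Nf I) (hN : N ∈ J) (hJ : UniqueDiffWithinAt ℝ J N)
    (hn' : ∀ a, HasDerivWithinAt (fun t => Nf t a) (n' a) J N)
    (hI' : HasDerivWithinAt I I' J N) :
    I' = (I N * M.hB B (Nf N) + M.hN B (Nf N)) / M.fluidDenom B (Nf N) := by
  obtain ⟨hrate, hcross⟩ := h.rate_zero_and_index_cross_rate_eq hN hJ hn' hI'
  rw [hrate] at hcross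
  apply mul_left_cancel₀ (h.pos N hN 0).ne'
  linear_combination hcross

lemma hasDerivWithinAt_W_of_mem_sdiff (h : M.IsFluidOn B J Nf I) (hN : N ∈ J)
    (hJ : UniqueDiffWithinAt ℝ J N) (hn' : ∀ a, HasDerivWithinAt (fun t => Nf t a) (n' a) J N)
    (ha : a ∈ alt K \ B) :
    HasDerivWithinAt (fun t => M.W a (Nf t 0) (Nf t a))
      (n' 0 * M.d (M.μ 0) (M.x1 a (Nf N 0) (Nf N a))) J N := by
  refine (M.hasDerivWithinAt_W (mem_alt.1 (Finset.mem_sdiff.1 ha).1) (hn' 0) (hn' a)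
    (h.pos N hN 0) (h.pos N hN a)).congr_deriv ?_
  rw [h.rate_eq_zero hN hJ ha (hn' a), zero_mul, add_zero]

end IsFluidOn

end Bandit

-- Within-derivatives on an arbitrary `J` include the one-sided derivatives at an endpoint of `J`,
-- where a trajectory may have a kink because another arm joins `B`.
theorem statement_6_general {K : ℕ} [NeZero K] {M : Bandit K} {B : Finset (Fin K)} {J : Set ℝ}
    {Nf : ℝ → Fin K → ℝ} {I : ℝ → ℝ} {N : ℝ} {n' : Fin K → ℝ} (h : M.IsFluidOn B J Nf I)
    (hN : N ∈ J) (hJ : UniqueDiffWithinAt ℝ J N)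
    (hn' : ∀ a, HasDerivWithinAt (fun t => Nf t a) (n' a) J N) :
    n' 0 = Nf N 0 * M.hB B (Nf N) / M.fluidDenom B (Nf N) ∧
      (∀ b ∈ B, n' b = (Nf N b * M.hB B (Nf N) +
        (M.d (M.μ b) (M.x1 b (Nf N 0) (Nf N b)))⁻¹ * M.hN B (Nf N)) / M.fluidDenom B (Nf N)) ∧
      HasDerivWithinAt I
        ((I N * M.hB B (Nf N) + M.hN B (Nf N)) / M.fluidDenom B (Nf N)) J N ∧
      ∀ a ∈ alt K \ B,
        HasDerivWithinAt (fun t => M.W a (Nf t 0) (Nf t a))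
          (n' 0 * M.d (M.μ 0) (M.x1 a (Nf N 0) (Nf N a))) J N ∧
        n' 0 * M.d (M.μ 0) (M.x1 a (Nf N 0) (Nf N a)) =
          Nf N 0 * M.hB B (Nf N) * M.d (M.μ 0) (M.x1 a (Nf N 0) (Nf N a)) /
            M.fluidDenom B (Nf N) := by
  obtain ⟨b₀, hb₀⟩ := h.nonempty
  have hI' := h.hasDerivWithinAt_index hN hn' hb₀
  have hrate := (h.rate_zero_and_index_cross_rate_eq hN hJ hn' hI').1
  exact ⟨hrate, fun b hb => h.rate_eq hN hJ hn' hI' hb,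
    hI'.congr_deriv (h.index_rate_eq hN hJ hn' hI'),
    fun a ha => ⟨h.hasDerivWithinAt_W_of_mem_sdiff hN hJ hn' ha,
      by rw [hrate, div_mul_eq_mul_div]⟩⟩

/-- Theorem 4.3, fluid ODEs: along a fluid trajectory keeping `g = 0` and
the indexes of the arms in `B` equal, the allocation rates and index derivative are given
by the stated formulas, and the indexes off `B` grow at rate `N₁'·d(μ₁, x_{1,a})`. -/
theorem statement_6 {K : ℕ} [NeZero K] (M : Bandit K)
    (B : Finset (Fin K)) (hBne : B.Nonempty) (hBsub : B ⊆ alt K)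
    (J : Set ℝ) (hJopen : IsOpen J) (hJconn : Set.OrdConnected J) (hJpos : J ⊆ Set.Ioi 0)
    (Nf Nf' : ℝ → Fin K → ℝ) (IB : ℝ → ℝ)
    (hpos : ∀ N ∈ J, ∀ a, 0 < Nf N a)
    (hderiv : ∀ N ∈ J, ∀ a, HasDerivAt (fun t => Nf t a) (Nf' N a) N)
    (hsum : ∀ N ∈ J, ∑ a, Nf N a = N)
    (hconst : ∀ a ∈ alt K \ B, ∀ N ∈ J, ∀ N' ∈ J, Nf N a = Nf N' a)
    (hg : ∀ N ∈ J, M.g (Nf N) = 0)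
    (hIB : ∀ N ∈ J, ∀ a ∈ B, M.W a (Nf N 0) (Nf N a) = IB N) :
    ∀ N ∈ J,
      Nf' N 0 =
        Nf N 0 * M.hB B (Nf N) /
          ((Nf N 0 + ∑ a ∈ B, Nf N a) * M.hB B (Nf N) + (M.dB B (Nf N))⁻¹ * M.hN B (Nf N)) ∧
      (∀ b ∈ B, Nf' N b =
        (Nf N b * M.hB B (Nf N) +
            (M.d (M.μ b) (M.x1 b (Nf N 0) (Nf N b)))⁻¹ * M.hN B (Nf N)) /
          ((Nf N 0 + ∑ a ∈ B, Nf N a) * M.hB B (Nf N) + (M.dB B (Nf N))⁻¹ * M.hN B (Nf N))) ∧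
      HasDerivAt IB
        ((IB N * M.hB B (Nf N) + M.hN B (Nf N)) /
          ((Nf N 0 + ∑ a ∈ B, Nf N a) * M.hB B (Nf N) + (M.dB B (Nf N))⁻¹ * M.hN B (Nf N))) N ∧
      ∀ a ∈ alt K \ B,
        HasDerivAt (fun t => M.W a (Nf t 0) (Nf t a))
          (Nf' N 0 * M.d (M.μ 0) (M.x1 a (Nf N 0) (Nf N a))) N ∧
        Nf' N 0 * M.d (M.μ 0) (M.x1 a (Nf N 0) (Nf N a)) =
          Nf N 0 * M.hB B (Nf N) * M.d (M.μ 0) (M.x1 a (Nf N 0) (Nf N a)) /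
            ((Nf N 0 + ∑ b ∈ B, Nf N b) * M.hB B (Nf N) +
              (M.dB B (Nf N))⁻¹ * M.hN B (Nf N)) := by
  intro N hN
  obtain ⟨hrate, hrateB, hindex, hoff⟩ := statement_6_general
    ⟨hBne, hBsub, hpos, hsum, hconst, hg, hIB⟩ hN (hJopen.uniqueDiffWithinAt hN)
    fun a => (hderiv N hN a).hasDerivWithinAt
  exact ⟨hrate, hrateB, hindex.hasDerivAt (hJopen.mem_nhds hN),
    fun a ha => (hoff a ha).imp_left fun hW => hW.hasDerivAt (hJopen.mem_nhds hN)⟩
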